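/- Bellman fixed-point property of the lower value: Let 𝒢 = ⟨A, Φ_(Pr,R)⟩ be a 2½-player parity game with arena A = ⟨(S,E),(S₁,S₂,S_N),π⟩ and parity structure (Pr,R). Then the function Val↓(𝒢) : S → [0,1] is a fixed point of the functional 𝓕 : (S → [0,1]) → (S → [0,1]) defined by: 𝓕(f)(s) = R(s) if s is a terminal state; 𝓕(f)(s) = ⨆_{t ∈ E(s)} f(t) if s ∈ S₁; 𝓕(f)(s) = ⨅_{t ∈ E(s)} f(t) if s ∈ S₂; and 𝓕(f)(s) = ∑_{t ∈ E(s)} π(s)(t)·f(t) if s ∈ S_N. -/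

import Mathlib

noncomputable section

open scoped unitInterval Classical

/-- The three agents of a 2½-player game. -/
inductive Player : Type
  | one : Player
  | two : Player
  | nature : Player
deriving DecidableEq

/-- A 2½-player arena: a directed graph `(S, E)`, an assignment of states to the
players (Player 1, Player 2, Nature), and probabilistic transition data at Nature
states. -/
structure Arena (S : Type) where
  E : S → Set S
  owner : S → Player
  prob : S → S → ℝ

namespace Arena

variable {S : Type}

/-- Well-formedness: at every Nature state `s`, `prob s` is a probability
distribution whose support is exactly the set `E s` of successors of `s`. -/
def Wellformed (A : Arena S) : Prop :=
  ∀ s, A.owner s = Player.nature →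
    (∀ t, 0 ≤ A.prob s t) ∧ HasSum (A.prob s) 1 ∧ A.E s = Function.support (A.prob s)

/-- `s` is a terminal state if it has no successors. -/
def Terminal (A : Arena S) (s : S) : Prop := A.E s = ∅

end Arena

/-- An (unbounded memory deterministic) strategy for player `pl` in arena `A`:
given the history `hist` and the current state `s` (a non-terminal state owned by
`pl`), it picks a successor of `s`. -/
structure Strategy {S : Type} (A : Arena S) (pl : Player) where
  next : List S → S → S
  valid : ∀ (hist : List S) (s : S), A.owner s = pl → A.E s ≠ ∅ → next hist s ∈ A.E s

variable {S : Type}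

/-- The Markov chain determined by a strategy profile `(σ1, σ2)` and initial state
`s0`: the tree of finite paths from `s0` in which nodes ending in a Player 1
(resp. Player 2) state are extended uniquely according to `σ1` (resp. `σ2`), nodes
ending in a Nature state branch fully over the successors, and (for the purpose of
encoding finite completed paths as infinite sequences) nodes ending in a terminal
state are extended by repeating the terminal state. -/
inductive MC (A : Arena S) (σ1 : Strategy A Player.one) (σ2 : Strategy A Player.two)
    (s0 : S) : List S → Prop
  | root : MC A σ1 σ2 s0 [s0]
  | one (l : List S) (s : S) : MC A σ1 σ2 s0 (l ++ [s]) → A.owner s = Player.one →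
      A.E s ≠ ∅ → MC A σ1 σ2 s0 (l ++ [s, σ1.next l s])
  | two (l : List S) (s : S) : MC A σ1 σ2 s0 (l ++ [s]) → A.owner s = Player.two →
      A.E s ≠ ∅ → MC A σ1 σ2 s0 (l ++ [s, σ2.next l s])
  | nature (l : List S) (s t : S) : MC A σ1 σ2 s0 (l ++ [s]) →
      A.owner s = Player.nature → t ∈ A.E s → MC A σ1 σ2 s0 (l ++ [s, t])
  | term (l : List S) (s : S) : MC A σ1 σ2 s0 (l ++ [s]) → A.E s = ∅ →
      MC A σ1 σ2 s0 (l ++ [s, s])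

/-- The space of completed paths, encoded as infinite sequences of states
(a finite completed path, i.e. one ending in a terminal state, is encoded by
repeating its terminal state forever). -/
def PathSpace (S : Type) : Type := ℕ → S

instance : MeasurableSpace (PathSpace S) :=
  @MeasurableSpace.pi ℕ (fun _ => S) (fun _ => ⊤)

/-- The basic cylinder set of completed paths extending a finite path. -/
def cyl (l : List S) : Set (PathSpace S) :=
  {u | ∀ i : Fin l.length, u i = l.get i}

/-- the probability of a single step -/
def stepProb (A : Arena S) (s t : S) : ℝ :=
  if A.owner s = Player.nature then A.prob s t else 1

/-- The product of the probabilities of the Nature steps along a finite path. -/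
def pathProb (A : Arena S) : List S → ℝ
  | [] => 1
  | [_] => 1
  | s :: t :: l => stepProb A s t * pathProb A (t :: l)

/-- The weight assigned to a basic cylinder: the product of the probabilities of its
Nature steps if the underlying finite path belongs to the Markov chain, `0` otherwise. -/
def cylWeight (A : Arena S) (σ1 : Strategy A Player.one) (σ2 : Strategy A Player.two)
    (s0 : S) (l : List S) : ℝ :=
  if MC A σ1 σ2 s0 l then pathProb A l else 0

/-- The Borel probability measure on completed paths induced by the Markov chain
`M^{s0}_{σ1,σ2}`: the unique probability measure assigning to every basic cylinder
its weight. -/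
def pathMeasure (A : Arena S) (σ1 : Strategy A Player.one) (σ2 : Strategy A Player.two)
    (s0 : S) : MeasureTheory.Measure (PathSpace S) :=
  if h : ∃ μ : MeasureTheory.Measure (PathSpace S), MeasureTheory.IsProbabilityMeasure μ ∧
      ∀ l : List S, l ≠ [] → μ (cyl l) = ENNReal.ofReal (cylWeight A σ1 σ2 s0 l)
  then h.choose else 0

/-- The payoff function induced by a parity structure `(pri, R)`: a completed path
reaching a terminal state gets the reward `R` of (the first occurrence of) that
terminal state; an infinite path gets `1` if the greatest priority occurring
infinitely often along it is even, and `0` otherwise. -/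
def payoff (A : Arena S) (pri : S → ℕ) (R : S → ℝ) (u : PathSpace S) : ℝ :=
  if h : ∃ i, A.E (u i) = ∅ then R (u (Nat.find h))
  else if Even (sSup {n | {i | pri (u i) = n}.Infinite}) then 1 else 0

/-- The expected reward of Player 1 for the Markov chain `M^{s0}_{σ1,σ2}`:
the integral of the payoff against the induced probability measure on paths. -/
def expReward (A : Arena S) (pri : S → ℕ) (R : S → ℝ) (σ1 : Strategy A Player.one)
    (σ2 : Strategy A Player.two) (s0 : S) : ℝ :=
  ∫ u, payoff A pri R u ∂(pathMeasure A σ1 σ2 s0)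

/-- The lower value `Val↓` of the 2½-player parity game `⟨A, Φ_(pri,R)⟩`. -/
def lowerValue (A : Arena S) (pri : S → ℕ) (R : S → ℝ) (s : S) : ℝ :=
  ⨆ σ1 : Strategy A Player.one, ⨅ σ2 : Strategy A Player.two, expReward A pri R σ1 σ2 s

/-- The upper value `Val↑` of the 2½-player parity game `⟨A, Φ_(pri,R)⟩`. -/
def upperValue (A : Arena S) (pri : S → ℕ) (R : S → ℝ) (s : S) : ℝ :=
  ⨅ σ2 : Strategy A Player.two, ⨆ σ1 : Strategy A Player.one, expReward A pri R σ1 σ2 s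

/-- The Bellman functional `𝓕` on `S → ℝ` associated to the game `⟨A, Φ_(pri,R)⟩`. -/
def bellman (A : Arena S) (R : S → ℝ) (f : S → ℝ) : S → ℝ := fun s =>
  if A.E s = ∅ then R s
  else match A.owner s with
    | Player.one => sSup (f '' A.E s)
    | Player.two => sInf (f '' A.E s)
    | Player.nature => ∑' t : A.E s, A.prob s t * f t

section helpers
open MeasureTheory

theorem ps_coord (n : ℕ) (B : Set S) : MeasurableSet {u : PathSpace S | u n ∈ B} := by
  let _ : MeasurableSpace S := ⊤
  exact (measurable_pi_apply (X := fun _ : ℕ => S) n) (trivial : MeasurableSet B)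

theorem ps_meas {α : Type*} [MeasurableSpace α] (f : α → PathSpace S)
    (h : ∀ n (B : Set S), MeasurableSet {a | f a n ∈ B}) : Measurable f := by
  let _ : MeasurableSpace S := ⊤
  exact (measurable_pi_iff (X := fun _ : ℕ => S)).2 (fun n B _ => h n B)

theorem cyl_meas (l : List S) : MeasurableSet (cyl l) := by
  have : cyl l = ⋂ i : Fin l.length, {u : PathSpace S | u i ∈ ({l.get i} : Set S)} := by
    ext u; simp [cyl]
  rw [this]
  exact MeasurableSet.iInter fun i => ps_coord _ _

/-- two finite measures agreeing on events determined by finitely many coordinates are equal -/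
theorem ps_ext (μ ν : Measure (PathSpace S)) [IsFiniteMeasure μ]
    (h : ∀ (n : ℕ) (D : Set (PathSpace S)), MeasurableSet D →
      (∀ u v : PathSpace S, (∀ i < n, u i = v i) → u ∈ D → v ∈ D) → μ D = ν D) : μ = ν := by
  let _ : MeasurableSpace S := ⊤
  refine ext_of_generate_finite (measurableCylinders (fun _ : ℕ => S))
    generateFrom_measurableCylinders.symm isPiSystem_measurableCylinders ?_ ?_
  · intro D hD
    obtain ⟨s, T, hT, rfl⟩ := (mem_measurableCylinders _).1 hD
    refine h (s.sup id + 1) _ (MeasurableSet.cylinder s hT) ?_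
    intro u v huv hu
    have hu' := (mem_cylinder s T u).1 hu
    refine (mem_cylinder s T v).2 ?_
    convert hu' using 1
    funext i
    exact (huv i (Nat.lt_succ_of_le (Finset.le_sup (f := id) i.2))).symm
  · exact h 0 _ MeasurableSet.univ (by simp)

def wt (p : List S → PMF S) : List S → ENNReal
  | [] => 1
  | t :: l => p [] t * wt (fun h => p (t :: h)) l

theorem wt_snoc (l : List S) : ∀ (p : List S → PMF S) (t : S),
    wt p (l ++ [t]) = wt p l * p l t := by
  induction l with
  | nil => intro p t; simp [wt]
  | cons a l ih => intro p t; simp [wt, ih, mul_assoc]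

theorem wt_prod (l : List S) : ∀ (p : List S → PMF S),
    wt p l = ∏ i : Fin l.length, p (l.take i) (l.get i) := by
  induction l with
  | nil => intro p; simp [wt]
  | cons a l ih =>
    intro p
    rw [wt, ih]
    simp [Fin.prod_univ_succ]

def supPMF (q : PMF S) : PMF q.support :=
  ⟨fun t => q t, (hasSum_subtype_support (f := (q : S → ENNReal))).2 q.2⟩

instance supMS (q : PMF S) : MeasurableSpace q.support := ⊤

abbrev Om (p : List S → PMF S) : Type := (h : List S) → (p h).support

def hist (p : List S → PMF S) (ω : Om p) : ℕ → List S
  | 0 => []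
  | n + 1 => hist p ω n ++ [(ω (hist p ω n) : S)]

def opath (p : List S → PMF S) (ω : Om p) : PathSpace S := fun n => (ω (hist p ω n) : S)

theorem hist_len (p : List S → PMF S) (ω : Om p) (n : ℕ) : (hist p ω n).length = n := by
  induction n with
  | zero => rfl
  | succ n ih => simp [hist, ih]

theorem hist_countable (p : List S → PMF S) (n : ℕ) :
    (Set.range fun ω => hist p ω n).Countable := by
  induction n with
  | zero => exact (Set.countable_singleton []).mono (by rintro _ ⟨ω, rfl⟩; rfl)
  | succ n ih =>
    refine (ih.biUnion (t := fun h _ => (fun t => h ++ [t]) '' (p h).support)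
      (fun h _ => ((p h).support_countable).image _)).mono ?_
    rintro _ ⟨ω, rfl⟩
    simp only [Set.mem_iUnion]
    exact ⟨hist p ω n, ⟨ω, rfl⟩, _, (ω (hist p ω n)).2, rfl⟩

theorem hist_meas (p : List S → PMF S) (n : ℕ) (B : Set (List S)) :
    MeasurableSet {ω : Om p | hist p ω n ∈ B} := by
  induction n generalizing B with
  | zero => simp only [hist]; exact MeasurableSet.const _
  | succ n ih =>
    have : {ω : Om p | hist p ω (n+1) ∈ B} = ⋃ h ∈ Set.range fun ω => hist p ω n,
        ({ω : Om p | hist p ω n ∈ ({h} : Set (List S))} ∩ {ω | h ++ [(ω h : S)] ∈ B}) := by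
      ext ω
      simp only [Set.mem_iUnion, Set.mem_ofPred_eq, Set.mem_inter_iff, Set.mem_singleton_iff, hist]
      constructor
      · intro hB; exact ⟨_, ⟨ω, rfl⟩, rfl, hB⟩
      · rintro ⟨h, _, rfl, hB⟩; exact hB
    rw [this]
    refine MeasurableSet.biUnion (hist_countable p n) fun h _ => (ih _).inter ?_
    have hm : MeasurableSet {x : (p h).support | h ++ [(x:S)] ∈ B} := MeasurableSpace.measurableSet_top
    exact (measurable_pi_apply (X := fun h => (p h).support) h) hm

theorem opath_meas (p : List S → PMF S) : Measurable (opath p) := by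
  refine ps_meas _ fun n B => ?_
  convert hist_meas p (n+1) {l | ∃ h, ∃ x ∈ B, l = h ++ [x]} using 1
  ext ω
  simp only [opath, hist, Set.mem_ofPred_eq]
  constructor
  · intro h; exact ⟨_, _, h, rfl⟩
  · rintro ⟨h, x, hx, he⟩
    have := (List.append_inj' he rfl).2
    simp at this
    rwa [this]

def law (p : List S → PMF S) : Measure (PathSpace S) :=
  (Measure.infinitePi (fun h => (supPMF (p h)).toMeasure)).map (opath p)

instance law_prob (p : List S → PMF S) : IsProbabilityMeasure (law p) :=
  Measure.isProbabilityMeasure_map (opath_meas p).aemeasurable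

theorem hist_eq_take (p : List S → PMF S) (ω : Om p) (l : List S) (n : ℕ) (hn : n ≤ l.length)
    (h : ∀ i (hi : i < l.length), i < n → (ω (l.take i) : S) = l[i]) : hist p ω n = l.take n := by
  induction n with
  | zero => simp [hist]
  | succ n ih =>
    have h1 := ih (by omega) (fun i hi hin => h i hi (by omega))
    rw [hist, h1, h n (by omega) (by omega), List.take_append_getElem]

theorem opath_cyl (p : List S → PMF S) (ω : Om p) (l : List S) :
    opath p ω ∈ cyl l ↔ ∀ i (hi : i < l.length), (ω (l.take i) : S) = l[i] := by
  constructor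
  · intro h i
    induction i using Nat.strong_induction_on with
    | _ i ih =>
      intro hi
      have := h ⟨i, hi⟩
      have h2 := hist_eq_take p ω l i hi.le (fun j hj hji => ih j hji hj)
      simp only [opath] at this
      rw [h2] at this
      simpa using this
  · intro h i
    have h2 := hist_eq_take p ω l i i.2.le (fun j hj hji => h j hj)
    simp only [opath]
    rw [h2]
    simpa using h i i.2

theorem law_cyl (p : List S → PMF S) (l : List S) : law p (cyl l) = wt p l := by
  rw [law, Measure.map_apply (opath_meas p) (cyl_meas l)]
  have : opath p ⁻¹' cyl l = Set.pi (Finset.univ.image fun i : Fin l.length => l.take i)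
      (fun h => {x : (p h).support | l[h.length]? = some (x:S)}) := by
    ext ω
    rw [Set.mem_preimage, opath_cyl]
    simp only [Set.mem_pi, Finset.coe_image, Set.mem_image]
    constructor
    · rintro h _ ⟨i, _, rfl⟩
      have := h i i.2
      simp [i.2.le, this]
    · intro h i hi
      have := h (l.take i) ⟨⟨i, hi⟩, by simp, rfl⟩
      simp [hi.le, hi] at this
      exact this.symm
  rw [this, Measure.infinitePi_pi _ (fun _ _ => MeasurableSpace.measurableSet_top), Finset.prod_image, wt_prod]
  · refine Finset.prod_congr rfl fun i _ => ?_
    rw [PMF.toMeasure_apply _ MeasurableSpace.measurableSet_top]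
    have hi := i.2
    simp only [List.length_take, min_eq_left hi.le, List.getElem?_eq_getElem hi]
    by_cases hz : p (l.take i) l[i] = 0
    · rw [show l.get i = l[i] from rfl, hz]
      simp only [ENNReal.tsum_eq_zero]
      intro x
      rw [Set.indicator_apply_eq_zero]
      intro hx
      simp at hx
      exact absurd (hx ▸ hz) ((PMF.mem_support_iff _ _).1 x.2)
    · rw [tsum_eq_single ⟨l[i], hz⟩]
      · simp [supPMF]
        rfl
      · intro b hb
        rw [Set.indicator_apply_eq_zero]
        intro hx
        simp at hx
        exact absurd (Subtype.ext hx.symm) hb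
  · intro i _ j _ hij
    have := congrArg List.length hij
    simp [i.2.le, j.2.le] at this
    exact Fin.ext this

theorem law_unique (p : List S → PMF S) (μ : Measure (PathSpace S)) [IsProbabilityMeasure μ]
    (h : ∀ l, μ (cyl l) = wt p l) : μ = law p := by
  refine ps_ext _ _ fun n D hD hn => ?_
  have key : ∀ (ν : Measure (PathSpace S)) [IsProbabilityMeasure ν], (∀ l, ν (cyl l) = wt p l) →
      ν D = ∑' l : Set.range (fun ω => hist p ω n), if (cyl l.1 ∩ D).Nonempty then wt p l.1 else 0 := by
    intro ν _ hν
    have : Countable (Set.range (fun ω => hist p ω n)) := (hist_countable p n).to_subtype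
    have hdisj : Pairwise (Function.onFun Disjoint
        fun l : Set.range (fun ω => hist p ω n) => cyl l.1) := by
      rintro ⟨l, ω, rfl⟩ ⟨l', ω', rfl⟩ hne
      refine Set.disjoint_left.2 fun u hu hu' => hne ?_
      refine Subtype.ext (List.ext_getElem (by simp [hist_len]) fun i h1 h2 => ?_)
      have a := hu ⟨i, h1⟩
      have b := hu' ⟨i, h2⟩
      simp at a b
      rw [← a, ← b]
    have tot : ∀ (ρ : Measure (PathSpace S)), (∀ l, ρ (cyl l) = wt p l) →
        ρ (⋃ l : Set.range (fun ω => hist p ω n), cyl l.1) =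
          ∑' l : Set.range (fun ω => hist p ω n), wt p l.1 := by
      intro ρ hρ
      rw [measure_iUnion hdisj (fun l => cyl_meas _)]
      simp_rw [hρ]
    have one : law p (⋃ l : Set.range (fun ω => hist p ω n), cyl l.1) = 1 := by
      rw [law, Measure.map_apply (opath_meas p) (MeasurableSet.iUnion fun l => cyl_meas _)]
      convert measure_univ
      · ext ω
        simp only [Set.mem_preimage, Set.mem_iUnion, Set.mem_univ, iff_true]
        refine ⟨⟨_, ω, rfl⟩, ?_⟩
        clear hdisj tot
        intro i
        have hi := i.2
        simp only [hist_len] at hi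
        have : ∀ m k (hk : k < (hist p ω m).length), opath p ω k = (hist p ω m)[k] := by
          intro m
          induction m with
          | zero => intro k hk; simp [hist] at hk
          | succ m ih =>
            intro k hk
            by_cases hkm : k < m
            · have h1 : k < (hist p ω m).length := by rwa [hist_len]
              rw [ih k h1]
              simp only [hist]
              rw [List.getElem_append_left h1]
            · have : k = m := by rw [hist_len] at hk; omega
              subst this
              simp only [hist, opath]
              rw [List.getElem_append_right (by rw [hist_len])]
              simp
        exact this n i i.2
      · infer_instance
    have one' : ν (⋃ l : Set.range (fun ω => hist p ω n), cyl l.1) = 1 := by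
      rw [tot ν hν, ← tot (law p) (law_cyl p), one]
    have h0 : ν (⋃ l : Set.range (fun ω => hist p ω n), cyl l.1)ᶜ = 0 :=
      (prob_compl_eq_zero_iff (MeasurableSet.iUnion fun l => cyl_meas _)).2 one'
    rw [← measure_inter_conull h0, Set.inter_iUnion, measure_iUnion]
    · refine tsum_congr fun l => ?_
      split_ifs with hne
      · rw [← hν]
        congr 1
        refine Set.inter_eq_right.2 fun v hv => ?_
        obtain ⟨u, hu, huD⟩ := hne
        refine hn u v (fun i hi => ?_) huD
        obtain ⟨_, ω, rfl⟩ := l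
        have hi' : i < (hist p ω n).length := by rwa [hist_len]
        rw [hu ⟨i, hi'⟩, hv ⟨i, hi'⟩]
      · rw [Set.inter_comm, Set.not_nonempty_iff_eq_empty.1 hne, measure_empty]
    · intro l l' hne
      exact (hdisj hne).mono Set.inter_subset_right Set.inter_subset_right
    · exact fun l => hD.inter (cyl_meas _)
  rw [key μ h, key (law p) (law_cyl p)]

def pcons (t : S) (u : PathSpace S) : PathSpace S := fun n => Nat.casesOn n t u

theorem pcons_meas (t : S) : Measurable (pcons t) := by
  refine ps_meas _ fun n B => ?_
  cases n with
  | zero => exact MeasurableSet.const (t ∈ B)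
  | succ n => exact ps_coord n B

theorem pcons_cyl (t x : S) (l : List S) :
    pcons t ⁻¹' cyl (x :: l) = if t = x then cyl l else ∅ := by
  ext u
  have : u ∈ pcons t ⁻¹' cyl (x :: l) ↔ t = x ∧ u ∈ cyl l := by
    simp only [cyl, Set.mem_preimage, Set.mem_ofPred_eq]
    exact Fin.forall_fin_succ
  rw [this]
  split_ifs with h <;> simp [h]

theorem law_cons (p : List S → PMF S) : law p =
    Measure.sum (fun t => (p [] t) • (law (fun h => p (t :: h))).map (pcons t)) := by
  have hp : IsProbabilityMeasure
      (Measure.sum (fun t => (p [] t) • (law (fun h => p (t :: h))).map (pcons t))) := by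
    constructor
    rw [Measure.sum_apply _ MeasurableSet.univ]
    have : ∀ t, IsProbabilityMeasure ((law (fun h => p (t :: h))).map (pcons t)) := fun t =>
      Measure.isProbabilityMeasure_map (pcons_meas t).aemeasurable
    simp [(p []).tsum_coe]
  refine (law_unique p _ ?_).symm
  intro l
  cases l with
  | nil =>
    have : cyl ([] : List S) = Set.univ := by ext u; simp [cyl]
    rw [this, measure_univ, wt]
  | cons x l =>
    rw [Measure.sum_apply _ (cyl_meas _), tsum_eq_single x]
    · rw [Measure.smul_apply, Measure.map_apply (pcons_meas x) (cyl_meas _), pcons_cyl]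
      simp [law_cyl, wt]
    · intro t ht
      rw [Measure.smul_apply, Measure.map_apply (pcons_meas t) (cyl_meas _), pcons_cyl]
      simp [ht]

theorem law_integral (p : List S → PMF S) (f : PathSpace S → ℝ) (hf : Measurable f)
    (hb : ∀ u, f u ∈ Set.Icc (0:ℝ) 1) :
    HasSum (fun t => (p [] t).toReal * ∫ u, f (pcons t u) ∂(law (fun h => p (t :: h))))
      (∫ u, f u ∂(law p)) := by
  have hi : Integrable f (law p) := by
    refine Integrable.of_bound hf.aestronglyMeasurable 1 (ae_of_all _ fun u => ?_)
    rw [Real.norm_eq_abs, abs_of_nonneg (hb u).1]; exact (hb u).2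
  rw [law_cons p] at hi
  have := hasSum_integral_measure hi
  rw [← law_cons p] at this
  have e : (fun t => (p [] t).toReal * ∫ u, f (pcons t u) ∂(law (fun h => p (t :: h)))) =
      fun t => ∫ x, f x ∂((p [] t) • (law (fun h => p (t :: h))).map (pcons t)) := by
    funext t
    rw [integral_smul_measure, integral_map (pcons_meas t).aemeasurable hf.aestronglyMeasurable]
    rfl
  rw [e]
  exact this

theorem payoff_mem (A : Arena S) (pri : S → ℕ) (R : S → ℝ)
    (hR : ∀ s, A.E s = ∅ → R s ∈ Set.Icc (0:ℝ) 1) (u : PathSpace S) :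
    payoff A pri R u ∈ Set.Icc (0:ℝ) 1 := by
  unfold payoff
  split_ifs with h h2
  · exact hR _ (Nat.find_spec h)
  · simp
  · simp

theorem payoff_cons (A : Arena S) (pri : S → ℕ) (R : S → ℝ) (s : S) (hs : A.E s ≠ ∅)
    (u : PathSpace S) : payoff A pri R (pcons s u) = payoff A pri R u := by
  have hiff : (∃ i, A.E (pcons s u i) = ∅) ↔ ∃ i, A.E (u i) = ∅ := by
    constructor
    · rintro ⟨i, hi⟩
      cases i with
      | zero => exact absurd hi hs
      | succ i => exact ⟨i, hi⟩
    · rintro ⟨i, hi⟩; exact ⟨i + 1, hi⟩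
  unfold payoff
  by_cases h : ∃ i, A.E (u i) = ∅
  · rw [dif_pos h, dif_pos (hiff.2 h)]
    have : Nat.find (hiff.2 h) = Nat.find h + 1 := Nat.find_comp_succ (hiff.2 h) h hs
    rw [this]
    rfl
  · rw [dif_neg h, dif_neg (fun h' => h (hiff.1 h'))]
    have : ∀ n, {i | pri (pcons s u i) = n}.Infinite ↔ {i | pri (u i) = n}.Infinite := by
      intro n
      rw [← Nat.frequently_atTop_iff_infinite, ← Nat.frequently_atTop_iff_infinite,
        Filter.frequently_atTop, Filter.frequently_atTop]
      constructor
      · intro h a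
        obtain ⟨b, hb, hp⟩ := h (a + 1)
        obtain ⟨c, rfl⟩ : ∃ c, b = c + 1 := ⟨b - 1, by omega⟩
        exact ⟨c, by omega, hp⟩
      · intro h a
        obtain ⟨b, hb, hp⟩ := h a
        exact ⟨b + 1, by omega, hp⟩
    simp only [this]

theorem parity_meas (pri : S → ℕ) (hpri : (Set.range pri).Finite) :
    MeasurableSet {u : PathSpace S | Even (sSup {n | {i | pri (u i) = n}.Infinite})} := by
  have hinf : ∀ n, MeasurableSet {u : PathSpace S | {i | pri (u i) = n}.Infinite} := by
    intro n
    have : {u : PathSpace S | {i | pri (u i) = n}.Infinite} =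
        ⋂ a : ℕ, ⋃ b : ℕ, ⋃ _ : a ≤ b, {u : PathSpace S | u b ∈ {x | pri x = n}} := by
      ext u
      rw [Set.mem_ofPred_eq, ← Nat.frequently_atTop_iff_infinite, Filter.frequently_atTop]
      simp
    rw [this]
    exact MeasurableSet.iInter fun a => MeasurableSet.iUnion fun b => MeasurableSet.iUnion fun _ =>
      ps_coord _ _
  have heq : ∀ T : Set ℕ, MeasurableSet
      {u : PathSpace S | {n | {i | pri (u i) = n}.Infinite} = T} := by
    intro T
    have : {u : PathSpace S | {n | {i | pri (u i) = n}.Infinite} = T} =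
        ⋂ n : ℕ, {u : PathSpace S | {i | pri (u i) = n}.Infinite ↔ n ∈ T} := by
      ext u
      simp [Set.ext_iff]
    rw [this]
    refine MeasurableSet.iInter fun n => ?_
    by_cases hn : n ∈ T
    · simpa [hn] using hinf n
    · simp only [hn, iff_false]
      exact (hinf n).compl
  have : {u : PathSpace S | Even (sSup {n | {i | pri (u i) = n}.Infinite})} =
      ⋃ T ∈ {T : Set ℕ | T ⊆ Set.range pri ∧ Even (sSup T)},
        {u : PathSpace S | {n | {i | pri (u i) = n}.Infinite} = T} := by
    ext u
    simp only [Set.mem_ofPred_eq, Set.mem_iUnion]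
    constructor
    · intro h
      refine ⟨_, ⟨?_, h⟩, rfl⟩
      intro n hn
      obtain ⟨i, hi⟩ := Set.Infinite.nonempty hn
      exact ⟨_, hi⟩
    · rintro ⟨T, ⟨_, h⟩, rfl⟩
      exact h
  rw [this]
  exact MeasurableSet.biUnion ((hpri.finite_subsets.subset (fun T hT => hT.1)).countable)
    fun T _ => heq T

theorem payoff_meas (A : Arena S) (pri : S → ℕ) (hpri : (Set.range pri).Finite) (R : S → ℝ) :
    Measurable (payoff A pri R) := by
  have hterm : MeasurableSet {u : PathSpace S | ∃ i, A.E (u i) = ∅} := by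
    have : {u : PathSpace S | ∃ i, A.E (u i) = ∅} =
        ⋃ i, {u : PathSpace S | u i ∈ {s | A.E s = ∅}} := by ext u; simp
    rw [this]
    exact MeasurableSet.iUnion fun i => ps_coord _ _
  have hex : ∀ u : PathSpace S, ∃ n, A.E (u n) = ∅ ∨ ¬ ∃ i, A.E (u i) = ∅ := by
    intro u
    by_cases h : ∃ i, A.E (u i) = ∅
    · exact ⟨h.choose, Or.inl h.choose_spec⟩
    · exact ⟨0, Or.inr h⟩
  obtain ⟨F, hF⟩ : ∃ F : ℕ → PathSpace S → ℝ, ∀ n u, F n u = if ∃ i, A.E (u i) = ∅ then R (u n)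
        else if Even (sSup {n | {i | pri (u i) = n}.Infinite}) then 1 else 0 := ⟨_, fun _ _ => rfl⟩
  have hFm : ∀ n, Measurable (F n) := by
    intro n
    rw [show F n = _ from funext (hF n)]
    refine Measurable.ite hterm ?_ (Measurable.ite (parity_meas pri hpri)
        measurable_const measurable_const)
    intro B _
    exact ps_coord n (R ⁻¹' B)
  have hPm : ∀ n, MeasurableSet {u : PathSpace S | A.E (u n) = ∅ ∨ ¬ ∃ i, A.E (u i) = ∅} :=
    fun n => (ps_coord n {s | A.E s = ∅}).union hterm.compl
  have key := Measurable.find hFm hPm hex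
  convert key using 1
  funext u
  rw [hF]
  unfold payoff
  by_cases h : ∃ i, A.E (u i) = ∅
  · rw [dif_pos h, if_pos h]
    congr 2
    refine Nat.find_congr' ?_
    intro n
    simp [h]
  · rw [dif_neg h, if_neg h]

/-- distribution of the next state -/
def natPMF (A : Arena S) (hA : A.Wellformed) (s : S) (h : A.owner s = Player.nature) : PMF S :=
  ⟨fun t => ENNReal.ofReal (A.prob s t), by
    have h1 := hA s h
    have := ENNReal.ofReal_tsum_of_nonneg h1.1 h1.2.1.summable
    rw [h1.2.1.tsum_eq, ENNReal.ofReal_one] at this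
    rw [this]
    exact ENNReal.summable.hasSum⟩

def nextPMF (A : Arena S) (hA : A.Wellformed) (σ1 : Strategy A Player.one)
    (σ2 : Strategy A Player.two) (l : List S) (s : S) : PMF S :=
  if A.E s = ∅ then PMF.pure s
  else if h : A.owner s = Player.nature then natPMF A hA s h
  else if A.owner s = Player.one then PMF.pure (σ1.next l s) else PMF.pure (σ2.next l s)

/-- transition from history `t :: h` -/
def step (A : Arena S) (hA : A.Wellformed) (σ1 : Strategy A Player.one)
    (σ2 : Strategy A Player.two) (t : S) (h : List S) : PMF S :=
  nextPMF A hA σ1 σ2 (t :: h).dropLast ((t :: h).getLast (by simp))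

def full (A : Arena S) (hA : A.Wellformed) (σ1 : Strategy A Player.one)
    (σ2 : Strategy A Player.two) (s0 : S) : List S → PMF S
  | [] => PMF.pure s0
  | t :: h => step A hA σ1 σ2 t h

theorem full_snoc (A : Arena S) (hA : A.Wellformed) (σ1 : Strategy A Player.one)
    (σ2 : Strategy A Player.two) (s0 : S) (l : List S) (s : S) :
    full A hA σ1 σ2 s0 (l ++ [s]) = nextPMF A hA σ1 σ2 l s := by
  cases l with
  | nil => simp [full, step]
  | cons a l =>
    simp only [List.cons_append, full, step]
    congr 1
    · rw [← List.cons_append, List.dropLast_concat]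
    · simp

theorem MC_single {A : Arena S} {σ1 : Strategy A Player.one}
    {σ2 : Strategy A Player.two} {s0 x : S} : MC A σ1 σ2 s0 [x] ↔ x = s0 := by
  constructor
  · intro h
    generalize hl : [x] = l at h
    cases h with
    | root => simpa using hl
    | one l s => have := congrArg List.length hl; simp at this
    | two l s => have := congrArg List.length hl; simp at this
    | nature l s => have := congrArg List.length hl; simp at this
    | term l s => have := congrArg List.length hl; simp at this
  · rintro rfl; exact MC.root

theorem app2 {l l' : List S} {a b a' b' : S} (h : l ++ [a, b] = l' ++ [a', b']) :
    l = l' ∧ a = a' ∧ b = b' := by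
  have := List.append_inj' h rfl
  simpa using this

theorem MC_snoc {A : Arena S} {hA : A.Wellformed} {σ1 : Strategy A Player.one}
    {σ2 : Strategy A Player.two} {s0 : S} {l : List S} {s t : S} :
    MC A σ1 σ2 s0 (l ++ [s, t]) ↔ MC A σ1 σ2 s0 (l ++ [s]) ∧ nextPMF A hA σ1 σ2 l s t ≠ 0 := by
  constructor
  · intro h
    generalize hl : l ++ [s, t] = l' at h
    cases h with
    | root => have := congrArg List.length hl; simp at this
    | one l' s' h1 h2 h3 =>
      obtain ⟨rfl, rfl, rfl⟩ := app2 hl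
      exact ⟨h1, by simp [nextPMF, h2, h3]⟩
    | two l' s' h1 h2 h3 =>
      obtain ⟨rfl, rfl, rfl⟩ := app2 hl
      exact ⟨h1, by simp [nextPMF, h2, h3]⟩
    | nature l' s' t' h1 h2 h3 =>
      obtain ⟨rfl, rfl, rfl⟩ := app2 hl
      refine ⟨h1, ?_⟩
      have hne : A.E s ≠ ∅ := Set.nonempty_iff_ne_empty.1 ⟨_, h3⟩
      have hs := hA s h2
      rw [hs.2.2, Function.mem_support] at h3
      have : natPMF A hA s h2 t = ENNReal.ofReal (A.prob s t) := rfl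
      simp only [nextPMF, h2, hne, dif_pos, if_false, this]
      simp only [ne_eq, ENNReal.ofReal_eq_zero, not_le]
      exact lt_of_le_of_ne (hs.1 t) (Ne.symm h3)
    | term l' s' h1 h2 =>
      obtain ⟨rfl, rfl, rfl⟩ := app2 hl
      exact ⟨h1, by simp [nextPMF, h2]⟩
  · rintro ⟨h1, h2⟩
    unfold nextPMF at h2
    split_ifs at h2 with ha hb hc
    · simp at h2
      subst h2
      exact MC.term _ _ h1 ha
    · refine MC.nature _ _ _ h1 hb ?_
      rw [(hA s hb).2.2, Function.mem_support]
      intro h0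
      apply h2
      show ENNReal.ofReal (A.prob s t) = 0
      simp [h0]
    · simp at h2
      subst h2
      exact MC.one _ _ h1 hc ha
    · simp at h2
      subst h2
      refine MC.two _ _ h1 ?_ ha
      cases ho : A.owner s <;> simp_all

theorem pathProb_snoc (A : Arena S) (l : List S) (s t : S) :
    pathProb A (l ++ [s, t]) = pathProb A (l ++ [s]) * stepProb A s t := by
  induction l with
  | nil => simp [pathProb]
  | cons a l ih =>
    cases l with
    | nil => simp [pathProb]
    | cons b l =>
      simp only [List.cons_append, pathProb] at ih ⊢
      rw [ih, mul_assoc]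

theorem nextPMF_stepProb {A : Arena S} {hA : A.Wellformed} {σ1 : Strategy A Player.one}
    {σ2 : Strategy A Player.two} {l : List S} {s t : S} (h : nextPMF A hA σ1 σ2 l s t ≠ 0) :
    nextPMF A hA σ1 σ2 l s t = ENNReal.ofReal (stepProb A s t) := by
  unfold nextPMF at h ⊢
  split_ifs at h ⊢ with ha hb hc
  · simp at h
    have hn : A.owner s ≠ Player.nature := by
      intro hn
      have h1 := (hA s hn)
      rw [ha] at h1
      have h0 : A.prob s = 0 := Function.support_eq_empty_iff.1 h1.2.2.symm
      have := h1.2.1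
      rw [h0] at this
      exact zero_ne_one (hasSum_zero.unique this)
    simp [h, stepProb, hn]
  · simp only [stepProb, hb, if_true]; rfl
  · simp at h; simp [h, stepProb, hb]
  · simp at h; simp [h, stepProb, hb]

theorem stepProb_nonneg {A : Arena S} (hA : A.Wellformed) (s t : S) : 0 ≤ stepProb A s t := by
  unfold stepProb
  split_ifs with h
  · exact (hA s h).1 t
  · exact zero_le_one

theorem cylWeight_wt (A : Arena S) (hA : A.Wellformed) (σ1 : Strategy A Player.one)
    (σ2 : Strategy A Player.two) (s0 : S) (l : List S) : ∀ s,
    ENNReal.ofReal (cylWeight A σ1 σ2 s0 (l ++ [s])) = wt (full A hA σ1 σ2 s0) (l ++ [s]) := by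
  induction l using List.reverseRecOn with
  | nil =>
    intro s
    by_cases h : s = s0 <;> simp [cylWeight, MC_single, wt, full, pathProb, h]
  | append_singleton l a ih =>
    intro t
    rw [wt_snoc, ← ih, full_snoc, List.append_assoc]
    simp only [List.cons_append, List.nil_append, cylWeight, MC_snoc (hA := hA)]
    by_cases h1 : MC A σ1 σ2 s0 (l ++ [a])
    · by_cases h2 : nextPMF A hA σ1 σ2 l a t = 0
      · simp [h2]
      · rw [if_pos ⟨h1, h2⟩, if_pos h1, nextPMF_stepProb h2, pathProb_snoc, ENNReal.ofReal_mul' (stepProb_nonneg hA _ _)]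
    · simp [h1]

theorem pathMeasure_eq (A : Arena S) (hA : A.Wellformed) (σ1 : Strategy A Player.one)
    (σ2 : Strategy A Player.two) (s0 : S) :
    pathMeasure A σ1 σ2 s0 = law (full A hA σ1 σ2 s0) := by
  have hw : ∀ l : List S, l ≠ [] → ENNReal.ofReal (cylWeight A σ1 σ2 s0 l) =
      wt (full A hA σ1 σ2 s0) l := by
    intro l hl
    rw [← List.dropLast_append_getLast hl]
    exact cylWeight_wt A hA σ1 σ2 s0 _ _
  have hex : ∃ μ : MeasureTheory.Measure (PathSpace S), MeasureTheory.IsProbabilityMeasure μ ∧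
      ∀ l : List S, l ≠ [] → μ (cyl l) = ENNReal.ofReal (cylWeight A σ1 σ2 s0 l) :=
    ⟨law (full A hA σ1 σ2 s0), inferInstance, fun l hl => by rw [law_cyl, hw l hl]⟩
  rw [pathMeasure, dif_pos hex]
  have := hex.choose_spec.1
  refine law_unique _ _ fun l => ?_
  by_cases hl : l = []
  · subst hl
    have : cyl ([] : List S) = Set.univ := by ext u; simp [cyl]
    rw [this, measure_univ, wt]
  · rw [hex.choose_spec.2 l hl, hw l hl]

theorem expReward_eq (A : Arena S) (hA : A.Wellformed) (pri : S → ℕ)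
    (hpri : (Set.range pri).Finite) (R : S → ℝ) (hR : ∀ s, A.E s = ∅ → R s ∈ Set.Icc (0:ℝ) 1)
    (σ1 : Strategy A Player.one) (σ2 : Strategy A Player.two) (s : S) :
    expReward A pri R σ1 σ2 s = ∫ u, payoff A pri R (pcons s u) ∂(law (step A hA σ1 σ2 s)) := by
  rw [expReward, pathMeasure_eq A hA]
  have h := law_integral (full A hA σ1 σ2 s) (payoff A pri R) (payoff_meas A pri hpri R)
    (payoff_mem A pri R hR)
  have h2 := hasSum_single (f := fun t => (full A hA σ1 σ2 s [] t).toReal *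
    ∫ u, payoff A pri R (pcons t u) ∂(law (fun h => full A hA σ1 σ2 s (t :: h)))) s (by
      intro t ht
      simp [full, ht])
  rw [h.unique h2]
  simp [full]

theorem expReward_mem (A : Arena S) (hA : A.Wellformed) (pri : S → ℕ)
    (R : S → ℝ) (hR : ∀ s, A.E s = ∅ → R s ∈ Set.Icc (0:ℝ) 1)
    (σ1 : Strategy A Player.one) (σ2 : Strategy A Player.two) (s : S) :
    expReward A pri R σ1 σ2 s ∈ Set.Icc (0:ℝ) 1 := by
  rw [expReward, pathMeasure_eq A hA]
  refine ⟨integral_nonneg fun u => (payoff_mem A pri R hR u).1, ?_⟩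
  refine (integral_mono_of_nonneg (ae_of_all _ fun u => (payoff_mem A pri R hR u).1)
    (integrable_const (1:ℝ)) (ae_of_all _ fun u => (payoff_mem A pri R hR u).2)).trans ?_
  simp

theorem expReward_term (A : Arena S) (hA : A.Wellformed) (pri : S → ℕ)
    (hpri : (Set.range pri).Finite) (R : S → ℝ) (hR : ∀ s, A.E s = ∅ → R s ∈ Set.Icc (0:ℝ) 1)
    (σ1 : Strategy A Player.one) (σ2 : Strategy A Player.two) (s : S) (hs : A.E s = ∅) :
    expReward A pri R σ1 σ2 s = R s := by
  rw [expReward_eq A hA pri hpri R hR]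
  have : ∀ u, payoff A pri R (pcons s u) = R s := by
    intro u
    have h : ∃ i, A.E (pcons s u i) = ∅ := ⟨0, hs⟩
    rw [payoff, dif_pos h, (Nat.find_eq_zero h).2 hs]
    rfl
  simp [this]

def shiftS {A : Arena S} {pl : Player} (s : S) (τ : Strategy A pl) : Strategy A pl :=
  ⟨fun h x => τ.next (s :: h) x, fun h x => τ.valid (s :: h) x⟩

/-- play like `d` on the empty history, and afterwards like `τ t` where `t` is the second state -/
def glue {A : Arena S} {pl : Player} (d : Strategy A pl) (τ : S → Strategy A pl) :
    Strategy A pl :=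
  ⟨fun h x => match h with
    | [] => d.next [] x
    | _ :: [] => (τ x).next [] x
    | _ :: b :: h' => (τ b).next (b :: h') x, by
    intro h x
    match h with
    | [] => exact d.valid [] x
    | _ :: [] => exact (τ x).valid [] x
    | _ :: b :: h' => exact (τ b).valid (b :: h') x⟩

theorem expReward_congr (A : Arena S) (hA : A.Wellformed) (pri : S → ℕ)
    (hpri : (Set.range pri).Finite) (R : S → ℝ) (hR : ∀ s, A.E s = ∅ → R s ∈ Set.Icc (0:ℝ) 1)
    (σ1 σ1' : Strategy A Player.one) (σ2 σ2' : Strategy A Player.two) (t : S)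
    (h1 : σ1.next [] t = σ1'.next [] t) (h2 : σ2.next [] t = σ2'.next [] t)
    (h1' : ∀ h x, σ1.next (t :: h) x = σ1'.next (t :: h) x)
    (h2' : ∀ h x, σ2.next (t :: h) x = σ2'.next (t :: h) x) :
    expReward A pri R σ1 σ2 t = expReward A pri R σ1' σ2' t := by
  rw [expReward_eq A hA pri hpri R hR, expReward_eq A hA pri hpri R hR]
  have : step A hA σ1 σ2 t = step A hA σ1' σ2' t := by
    funext h
    cases h with
    | nil => simp [step, nextPMF, h1, h2]
    | cons a h => simp [step, nextPMF, h1', h2']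
  rw [this]

theorem expReward_step (A : Arena S) (hA : A.Wellformed) (pri : S → ℕ)
    (hpri : (Set.range pri).Finite) (R : S → ℝ) (hR : ∀ s, A.E s = ∅ → R s ∈ Set.Icc (0:ℝ) 1)
    (σ1 : Strategy A Player.one) (σ2 : Strategy A Player.two) (s : S) (hs : A.E s ≠ ∅) :
    HasSum (fun t => (nextPMF A hA σ1 σ2 [] s t).toReal *
      expReward A pri R (shiftS s σ1) (shiftS s σ2) t) (expReward A pri R σ1 σ2 s) := by
  rw [expReward_eq A hA pri hpri R hR]
  simp only [payoff_cons A pri R s hs]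
  have key := law_integral (step A hA σ1 σ2 s) (payoff A pri R) (payoff_meas A pri hpri R)
    (payoff_mem A pri R hR)
  have e : (fun t => (nextPMF A hA σ1 σ2 [] s t).toReal *
      expReward A pri R (shiftS s σ1) (shiftS s σ2) t) = fun t => (step A hA σ1 σ2 s [] t).toReal *
      ∫ u, payoff A pri R (pcons t u) ∂(law (fun h => step A hA σ1 σ2 s (t :: h))) := by
    funext t
    rw [expReward_eq A hA pri hpri R hR]
    have : step A hA (shiftS s σ1) (shiftS s σ2) t = fun h => step A hA σ1 σ2 s (t :: h) := by
      funext h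
      simp [step, nextPMF, shiftS]
    rw [this]
    rfl
  rw [e]
  exact key

section game
variable (A : Arena S) (hA : A.Wellformed) (pri : S → ℕ)
    (hpri : (Set.range pri).Finite) (R : S → ℝ) (hR : ∀ s, A.E s = ∅ → R s ∈ Set.Icc (0:ℝ) 1)

instance strat_nonempty (pl : Player) : Nonempty (Strategy A pl) :=
  ⟨⟨fun _ s => if h : (A.E s).Nonempty then h.choose else s, by
    intro _ s _ h
    have h' := Set.nonempty_iff_ne_empty.2 h
    simp only [dif_pos h']
    exact h'.choose_spec⟩⟩

/-- value of a strategy of Player 1 -/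
def sval (σ1 : Strategy A Player.one) (s : S) : ℝ :=
  ⨅ σ2 : Strategy A Player.two, expReward A pri R σ1 σ2 s

include hA hR

theorem sval_le (σ1 : Strategy A Player.one) (σ2 : Strategy A Player.two) (s : S) :
    sval A pri R σ1 s ≤ expReward A pri R σ1 σ2 s :=
  ciInf_le ⟨0, by rintro _ ⟨σ2, rfl⟩; exact (expReward_mem A hA pri R hR σ1 σ2 s).1⟩ σ2

theorem sval_mem (σ1 : Strategy A Player.one) (s : S) :
    sval A pri R σ1 s ∈ Set.Icc (0:ℝ) 1 := by
  refine ⟨le_ciInf fun σ2 => (expReward_mem A hA pri R hR σ1 σ2 s).1, ?_⟩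
  obtain ⟨σ2⟩ := strat_nonempty A Player.two
  exact (sval_le A hA pri R hR σ1 σ2 s).trans (expReward_mem A hA pri R hR σ1 σ2 s).2

theorem le_lv (σ1 : Strategy A Player.one) (s : S) :
    sval A pri R σ1 s ≤ lowerValue A pri R s :=
  le_ciSup (f := fun σ1 => sval A pri R σ1 s)
    ⟨1, by rintro _ ⟨σ1, rfl⟩; exact (sval_mem A hA pri R hR σ1 s).2⟩ σ1

omit hA hR in
theorem lv_le (s : S) (c : ℝ) (h : ∀ σ1 : Strategy A Player.one, sval A pri R σ1 s ≤ c) :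
    lowerValue A pri R s ≤ c := ciSup_le h

theorem lv_mem (s : S) : lowerValue A pri R s ∈ Set.Icc (0:ℝ) 1 := by
  obtain ⟨σ1⟩ := strat_nonempty A Player.one
  exact ⟨(sval_mem A hA pri R hR σ1 s).1.trans (le_lv A hA pri R hR σ1 s),
    lv_le A pri R s 1 fun σ1 => (sval_mem A hA pri R hR σ1 s).2⟩

omit hA hR in
theorem exists_near1 (s : S) (ε : ℝ) (hε : 0 < ε) :
    ∃ σ1 : Strategy A Player.one, lowerValue A pri R s - ε < sval A pri R σ1 s :=
  exists_lt_of_lt_ciSup (f := fun σ1 => sval A pri R σ1 s) (sub_lt_self _ hε)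

omit hA hR in
theorem exists_near2 (σ1 : Strategy A Player.one) (s : S) (ε : ℝ) (hε : 0 < ε) :
    ∃ σ2 : Strategy A Player.two, expReward A pri R σ1 σ2 s < sval A pri R σ1 s + ε :=
  exists_lt_of_ciInf_lt (f := fun σ2 => expReward A pri R σ1 σ2 s) (lt_add_of_pos_right _ hε)

include hpri

theorem step_one (σ1 : Strategy A Player.one) (σ2 : Strategy A Player.two) (s : S)
    (hs : A.E s ≠ ∅) (ho : A.owner s = Player.one) :
    expReward A pri R σ1 σ2 s =
      expReward A pri R (shiftS s σ1) (shiftS s σ2) (σ1.next [] s) := by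
  have h := expReward_step A hA pri hpri R hR σ1 σ2 s hs
  have h2 := hasSum_single (f := fun t => (nextPMF A hA σ1 σ2 [] s t).toReal *
      expReward A pri R (shiftS s σ1) (shiftS s σ2) t) (σ1.next [] s)
      (by intro t ht; simp [nextPMF, hs, ho, ht])
  rw [h.unique h2]
  simp [nextPMF, hs, ho]

theorem step_two (σ1 : Strategy A Player.one) (σ2 : Strategy A Player.two) (s : S)
    (hs : A.E s ≠ ∅) (ho : A.owner s = Player.two) :
    expReward A pri R σ1 σ2 s =
      expReward A pri R (shiftS s σ1) (shiftS s σ2) (σ2.next [] s) := by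
  have h := expReward_step A hA pri hpri R hR σ1 σ2 s hs
  have h2 := hasSum_single (f := fun t => (nextPMF A hA σ1 σ2 [] s t).toReal *
      expReward A pri R (shiftS s σ1) (shiftS s σ2) t) (σ2.next [] s)
      (by intro t ht; simp [nextPMF, hs, ho, ht])
  rw [h.unique h2]
  simp [nextPMF, hs, ho]

theorem step_nature (σ1 : Strategy A Player.one) (σ2 : Strategy A Player.two) (s : S)
    (hs : A.E s ≠ ∅) (ho : A.owner s = Player.nature) :
    HasSum (fun t => A.prob s t * expReward A pri R (shiftS s σ1) (shiftS s σ2) t)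
      (expReward A pri R σ1 σ2 s) := by
  have h := expReward_step A hA pri hpri R hR σ1 σ2 s hs
  have e : ∀ t, (nextPMF A hA σ1 σ2 [] s t).toReal = A.prob s t := by
    intro t
    have : natPMF A hA s ho t = ENNReal.ofReal (A.prob s t) := rfl
    simp only [nextPMF, hs, ho, if_false, dif_pos, this]
    exact ENNReal.toReal_ofReal ((hA s ho).1 t)
  simpa only [e] using h

theorem glue_congr (d1 : Strategy A Player.one) (τ1 : S → Strategy A Player.one)
    (σ2 : Strategy A Player.two) (s t : S) :
    expReward A pri R (shiftS s (glue d1 τ1)) σ2 t = expReward A pri R (τ1 t) σ2 t :=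
  expReward_congr A hA pri hpri R hR _ _ _ _ _ rfl rfl (fun _ _ => rfl) (fun _ _ => rfl)

theorem glue_congr2 (d2 : Strategy A Player.two) (τ2 : S → Strategy A Player.two)
    (σ1 : Strategy A Player.one) (s t : S) :
    expReward A pri R σ1 (shiftS s (glue d2 τ2)) t = expReward A pri R σ1 (τ2 t) t :=
  expReward_congr A hA pri hpri R hR _ _ _ _ _ rfl rfl (fun _ _ => rfl) (fun _ _ => rfl)

omit hA hpri hR in
/-- a strategy moving from `s` to `t` -/
theorem exists_move (pl : Player) (s t : S) (ht : t ∈ A.E s) :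
    ∃ d : Strategy A pl, d.next [] s = t := by
  obtain ⟨d⟩ := strat_nonempty A pl
  refine ⟨⟨fun h x => if x = s then t else d.next h x, ?_⟩, by simp⟩
  intro h x hx hE
  by_cases hxs : x = s
  · simp only [hxs, if_true]; exact ht
  · simp only [hxs, if_false]; exact d.valid h x hx hE

theorem lv_one (s : S) (hs : A.E s ≠ ∅) (ho : A.owner s = Player.one) :
    sSup (lowerValue A pri R '' A.E s) = lowerValue A pri R s := by
  have hne : (lowerValue A pri R '' A.E s).Nonempty := (Set.nonempty_iff_ne_empty.2 hs).image _
  apply le_antisymm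
  · refine csSup_le hne ?_
    rintro _ ⟨t, ht, rfl⟩
    refine lv_le A pri R t _ fun τ => ?_
    obtain ⟨d, hd⟩ := exists_move A Player.one s t ht
    refine le_trans (le_ciInf fun σ2 => ?_) (le_lv A hA pri R hR (glue d fun _ => τ) s)
    rw [step_one A hA pri hpri R hR _ _ s hs ho]
    have : (glue d fun _ => τ).next [] s = t := hd
    rw [this, glue_congr A hA pri hpri R hR]
    exact sval_le A hA pri R hR _ _ _
  · refine lv_le A pri R s _ fun σ1 => ?_
    have ht : σ1.next [] s ∈ A.E s := σ1.valid [] s ho hs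
    have h1 : lowerValue A pri R (σ1.next [] s) ≤ sSup (lowerValue A pri R '' A.E s) :=
      le_csSup ⟨1, by rintro _ ⟨t, _, rfl⟩; exact (lv_mem A hA pri R hR t).2⟩ ⟨_, ht, rfl⟩
    refine le_trans ?_ ((le_lv A hA pri R hR (shiftS s σ1) _).trans h1)
    refine le_ciInf fun τ2 => ?_
    have := sval_le A hA pri R hR σ1 (glue τ2 fun _ => τ2) s
    rwa [step_one A hA pri hpri R hR _ _ s hs ho, glue_congr2 A hA pri hpri R hR] at this

theorem lv_two (s : S) (hs : A.E s ≠ ∅) (ho : A.owner s = Player.two) :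
    sInf (lowerValue A pri R '' A.E s) = lowerValue A pri R s := by
  have hne : (lowerValue A pri R '' A.E s).Nonempty := (Set.nonempty_iff_ne_empty.2 hs).image _
  apply le_antisymm
  · refine le_of_forall_pos_le_add fun ε hε => ?_
    choose τ1 hτ1 using fun t => exists_near1 A pri R t ε hε
    obtain ⟨d⟩ := strat_nonempty A Player.one
    rw [← sub_le_iff_le_add]
    refine le_trans (le_ciInf fun σ2 => ?_) (le_lv A hA pri R hR (glue d τ1) s)
    rw [step_two A hA pri hpri R hR _ _ s hs ho, glue_congr A hA pri hpri R hR]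
    have ht : σ2.next [] s ∈ A.E s := σ2.valid [] s ho hs
    have h1 : sInf (lowerValue A pri R '' A.E s) ≤ lowerValue A pri R (σ2.next [] s) :=
      csInf_le ⟨0, by rintro _ ⟨t, _, rfl⟩; exact (lv_mem A hA pri R hR t).1⟩ ⟨_, ht, rfl⟩
    have h2 := hτ1 (σ2.next [] s)
    have h3 := sval_le A hA pri R hR (τ1 (σ2.next [] s)) (shiftS s σ2) (σ2.next [] s)
    linarith
  · refine le_csInf hne ?_
    rintro _ ⟨t, ht, rfl⟩
    refine lv_le A pri R s _ fun σ1 => ?_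
    refine le_trans ?_ (le_lv A hA pri R hR (shiftS s σ1) t)
    refine le_ciInf fun τ2 => ?_
    obtain ⟨d, hd⟩ := exists_move A Player.two s t ht
    have := sval_le A hA pri R hR σ1 (glue d fun _ => τ2) s
    rw [step_two A hA pri hpri R hR _ _ s hs ho, glue_congr2 A hA pri hpri R hR] at this
    have e : (glue d fun _ => τ2).next [] s = t := hd
    rwa [e] at this

omit pri hpri R hR in
theorem prob_summable (s : S) (ho : A.owner s = Player.nature) (f : S → ℝ)
    (hf : ∀ t, f t ∈ Set.Icc (0:ℝ) 1) : Summable fun t => A.prob s t * f t :=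
  (hA s ho).2.1.summable.of_nonneg_of_le (fun t => mul_nonneg ((hA s ho).1 t) (hf t).1)
    (fun t => mul_le_of_le_one_right ((hA s ho).1 t) (hf t).2)

theorem lv_nature (s : S) (hs : A.E s ≠ ∅) (ho : A.owner s = Player.nature) :
    ∑' t, A.prob s t * lowerValue A pri R t = lowerValue A pri R s := by
  have hq := (hA s ho)
  have hsum := prob_summable A hA s ho _ (lv_mem A hA pri R hR)
  apply le_antisymm
  · refine le_of_forall_pos_le_add fun ε hε => ?_
    choose τ1 hτ1 using fun t => exists_near1 A pri R t ε hε
    obtain ⟨d⟩ := strat_nonempty A Player.one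
    rw [← sub_le_iff_le_add]
    refine le_trans (le_ciInf fun σ2 => ?_) (le_lv A hA pri R hR (glue d τ1) s)
    have h := step_nature A hA pri hpri R hR (glue d τ1) σ2 s hs ho
    have h2 := hsum.hasSum.sub (hq.2.1.mul_right ε)
    rw [one_mul] at h2
    refine hasSum_le (fun t => ?_) h2 h
    rw [glue_congr A hA pri hpri R hR, ← mul_sub]
    exact mul_le_mul_of_nonneg_left
      ((hτ1 t).le.trans (sval_le A hA pri R hR (τ1 t) (shiftS s σ2) t)) (hq.1 t)
  · refine lv_le A pri R s _ fun σ1 => ?_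
    refine le_of_forall_pos_le_add fun ε hε => ?_
    choose τ2 hτ2 using fun t => exists_near2 A pri R (shiftS s σ1) t ε hε
    obtain ⟨d⟩ := strat_nonempty A Player.two
    refine (sval_le A hA pri R hR σ1 (glue d τ2) s).trans ?_
    have h := step_nature A hA pri hpri R hR σ1 (glue d τ2) s hs ho
    have h2 := hsum.hasSum.add (hq.2.1.mul_right ε)
    rw [one_mul] at h2
    refine hasSum_le (fun t => ?_) h h2
    rw [glue_congr2 A hA pri hpri R hR, ← mul_add]
    refine mul_le_mul_of_nonneg_left ?_ (hq.1 t)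
    have := le_lv A hA pri R hR (shiftS s σ1) t
    linarith [hτ2 t]

end game
end helpers

/-- **Bellman fixed-point property of the lower value** of a 2½-player parity game. -/
theorem lowerValue_fixedPoint_bellman {S : Type} (A : Arena S) (hA : A.Wellformed)
    (pri : S → ℕ) (hpri : (Set.range pri).Finite)
    (R : S → ℝ) (hR : ∀ s, A.E s = ∅ → R s ∈ Set.Icc (0:ℝ) 1) :
    bellman A R (lowerValue A pri R) = lowerValue A pri R := by
  funext s
  unfold bellman
  by_cases hs : A.E s = ∅
  · rw [if_pos hs]
    simp only [lowerValue, expReward_term A hA pri hpri R hR _ _ s hs]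
    rw [ciInf_const, ciSup_const]
  · rw [if_neg hs]
    split
    · rename_i ho; exact lv_one A hA pri hpri R hR s hs ho
    · rename_i ho; exact lv_two A hA pri hpri R hR s hs ho
    · rename_i ho
      rw [← lv_nature A hA pri hpri R hR s hs ho]
      refine tsum_subtype_eq_of_support_subset (f := fun t => A.prob s t * lowerValue A pri R t) ?_
      rw [(hA s ho).2.2]
      exact Function.support_mul_subset_left _ _
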